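/- Proposition 1, part 2 (quantization error of the symmetric uniform quantizer after random Walsh–Hadamard rotation): let d ≥ 1, b ≥ 2, let H be a d × d real orthogonal matrix (H * Hᵀ = 1 and Hᵀ * H = 1) all of whose entries have absolute value 1/√d, let w : Fin d → ℝ be nonzero, and let δ ∈ (0, 1]. Then the number of sign patterns r : Fin d → Bool such that, with v_r := H.mulVec (fun i => σ(r) i * w i) (which is nonzero), ∑_{j} (Q_b(v_r) j − v_r j)² ≤ Real.log (4·d/δ) · (∑_i (w i)²) / (2 · (2^{b−1} − 1)²) is at least (1 − δ) · 2^d. -/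

import Mathlib

/-!
Rounding moves each coordinate of `v_r / s` by at most `1/2`, and since every `|v_r j / s|` is at
most `2^(b-1) - 1`, the clamp never acts (`abs_symQuant_sub_le`). Hence the squared error is at most
`d s² / 4 = d M² / (4 (2^(b-1) - 1)²)`, where `M = max_j |v_r j|`, and it suffices to have
`M² ≤ 2 log(4d/δ) ‖w‖² / d`.

Each coordinate of `v_r` is a Rademacher sum `∑ i, σ_i a_i` with `∑ i, a_i² = ‖w‖² / d`, because the
entries of `H` have absolute value `1/√d`. The Chernoff bound with `cosh x ≤ exp (x² / 2)`
(`card_tail_le`) shows that a one-sided deviation beyond `t = √(2 log(4d/δ) ‖w‖² / d)` has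
probability at most `δ / (4d)`. The union bound over the `d` coordinates and both signs gives
total failure probability at most `δ / 2`.
-/

open Matrix Finset

noncomputable section

/-- The sign vector associated with a Boolean pattern. -/
def signVec {d : ℕ} (r : Fin d → Bool) : Fin d → ℝ :=
  fun i => if r i then (1 : ℝ) else -1

/-- The scale of the `b`-bit symmetric uniform quantizer with clipping factor `c = 1`:
`s(u) = (max_i |u i|) / (2^(b-1) - 1)`. -/
def qScale (b d : ℕ) (u : Fin d → ℝ) : ℝ :=
  (⨆ i, |u i|) / ((2 : ℝ) ^ (b - 1) - 1)

/-- The integer clamp to the range of `b`-bit representable (signed) integers. -/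
def iClamp (b : ℕ) (z : ℤ) : ℤ :=
  max (-(2 ^ (b - 1))) (min z (2 ^ (b - 1) - 1))

/-- The `b`-bit symmetric uniform quantizer (with clipping factor `c = 1`). -/
def symQuant (b d : ℕ) (u : Fin d → ℝ) : Fin d → ℝ :=
  fun i => qScale b d u * ((iClamp b (round (u i / qScale b d u)) : ℤ) : ℝ)

lemma sum_exp_signVec {d : ℕ} (a : Fin d → ℝ) :
    ∑ r : Fin d → Bool, Real.exp (∑ i, signVec r i * a i) = ∏ i, (2 * Real.cosh (a i)) := by
  have h := Finset.prod_univ_sum (fun _ : Fin d => (Finset.univ : Finset Bool))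
    (fun i c => Real.exp ((if c then (1 : ℝ) else -1) * a i))
  rw [Fintype.piFinset_univ] at h
  simp only [Real.exp_sum, signVec]
  rw [← h]
  refine Finset.prod_congr rfl fun i _ => ?_
  simp [Real.cosh_eq]
  ring

/-- Moment generating function bound for a Rademacher sum, in counting form. -/
lemma sum_exp_signVec_le {d : ℕ} (a : Fin d → ℝ) :
    ∑ r : Fin d → Bool, Real.exp (∑ i, signVec r i * a i)
      ≤ 2 ^ d * Real.exp ((∑ i, (a i) ^ 2) / 2) := by
  rw [sum_exp_signVec, Finset.prod_mul_distrib, Finset.sum_div, Real.exp_sum]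
  simp only [Finset.prod_const, Finset.card_univ, Fintype.card_fin]
  gcongr with i
  exact Real.cosh_le_exp_half_sq _

/-- Hoeffding's one-sided tail bound for a Rademacher sum: the threshold is written
`√(2 L A)`, so that the probability bound is `exp (-L)`. -/
lemma card_tail_le {d : ℕ} (a : Fin d → ℝ) (A L : ℝ) (hA : 0 < A) (hL : 0 ≤ L)
    (ha : ∑ i, (a i) ^ 2 = A) :
    ((Finset.univ.filter fun r : Fin d → Bool =>
      Real.sqrt (2 * L * A) < ∑ i, signVec r i * a i).card : ℝ) ≤ 2 ^ d * Real.exp (-L) := by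
  set t := Real.sqrt (2 * L * A) with ht
  have ht0 : 0 ≤ t := Real.sqrt_nonneg _
  have ht2 : t ^ 2 = 2 * L * A := Real.sq_sqrt (by positivity)
  -- The Chernoff parameter `t / A` minimises `λ² A / 2 - λ t`.
  have h := sum_exp_signVec_le (fun i => t / A * a i)
  have e1 : (∑ i, (t / A * a i) ^ 2) / 2 = L := by
    simp only [mul_pow]
    rw [← Finset.mul_sum, ha, div_pow, ht2]
    field_simp
  have e2 : t / A * t = 2 * L := by
    rw [div_mul_eq_mul_div, ← sq, ht2]
    field_simp
  rw [e1] at h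
  have h2 : ((Finset.univ.filter fun r : Fin d → Bool =>
      t < ∑ i, signVec r i * a i).card : ℝ) * Real.exp (2 * L)
      ≤ ∑ r : Fin d → Bool, Real.exp (∑ i, signVec r i * (t / A * a i)) := by
    rw [← nsmul_eq_mul]
    refine (Finset.card_nsmul_le_sum _ _ _ fun r hr => ?_).trans
      (Finset.sum_le_sum_of_subset_of_nonneg (Finset.filter_subset _ _)
        fun _ _ _ => (Real.exp_pos _).le)
    have hr' := (Finset.mem_filter.mp hr).2
    have e3 : ∑ i, signVec r i * (t / A * a i) = t / A * ∑ i, signVec r i * a i := by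
      rw [Finset.mul_sum]
      exact Finset.sum_congr rfl fun i _ => by ring
    rw [Real.exp_le_exp, e3, ← e2]
    gcongr
  have h3 := h2.trans h
  rw [← le_div_iff₀ (Real.exp_pos _), mul_div_assoc, ← Real.exp_sub] at h3
  rwa [show L - 2 * L = -L by ring] at h3

/-- The quantizer never clips, so its error is the rounding error alone. For `u = 0` the scale
vanishes and both sides are zero. -/
lemma abs_symQuant_sub_le (b d : ℕ) (hb : 2 ≤ b) (u : Fin d → ℝ) (j : Fin d) :
    |symQuant b d u j - u j| ≤ qScale b d u / 2 := by
  have hN : (1 : ℝ) ≤ (2 : ℝ) ^ (b - 1) - 1 := by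
    have : (2 : ℝ) ^ 1 ≤ 2 ^ (b - 1) := pow_le_pow_right₀ (by norm_num) (by omega)
    linarith
  have hM : |u j| ≤ ⨆ i, |u i| := le_ciSup (f := fun i => |u i|) (Set.finite_range _).bddAbove j
  have hs : qScale b d u * ((2 : ℝ) ^ (b - 1) - 1) = ⨆ i, |u i| := by
    unfold qScale
    field_simp
  have hs0 : 0 ≤ qScale b d u := div_nonneg ((abs_nonneg _).trans hM) (by linarith)
  unfold symQuant
  rcases hs0.eq_or_lt with h0 | hpos
  · rw [← h0, zero_mul] at hs
    have : u j = 0 := abs_eq_zero.mp (le_antisymm (hs ▸ hM) (abs_nonneg _))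
    simp [← h0, this]
  · set s := qScale b d u
    have hx : |u j / s| ≤ (2 : ℝ) ^ (b - 1) - 1 := by
      rw [abs_div, abs_of_pos hpos, div_le_iff₀ hpos, mul_comm, hs]
      exact hM
    obtain ⟨hx1, hx2⟩ := abs_le.mp hx
    have r1 : round (u j / s) ≤ 2 ^ (b - 1) - 1 := by
      have := round_le_add_half (u j / s)
      have h : (round (u j / s) : ℝ) < ((2 ^ (b - 1) - 1 + 1 : ℤ) : ℝ) := by
        push_cast
        linarith
      have h' := Int.cast_lt.mp h
      omega
    have r2 : -(2 ^ (b - 1)) ≤ round (u j / s) := by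
      have := sub_half_lt_round (u j / s)
      have h : ((-(2 ^ (b - 1)) : ℤ) : ℝ) < (round (u j / s) : ℝ) := by
        push_cast
        linarith
      exact (Int.cast_lt.mp h).le
    have hc : iClamp b (round (u j / s)) = round (u j / s) := by
      rw [iClamp, min_eq_left r1, max_eq_right r2]
    have e : s * (round (u j / s) : ℝ) - u j = -(s * (u j / s - round (u j / s))) := by
      field_simp
      ring
    rw [hc, e, abs_neg, abs_mul, abs_of_pos hpos]
    have := mul_le_mul_of_nonneg_left (abs_sub_round (u j / s)) hpos.le
    linarith

/-- Deterministic error bound in terms of a uniform bound `t` on the coordinates. -/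
lemma sum_symQuant_sub_sq_le (b d : ℕ) (hd : 1 ≤ d) (hb : 2 ≤ b) (u : Fin d → ℝ) (t : ℝ)
    (ht : ∀ j, |u j| ≤ t) :
    ∑ j, (symQuant b d u j - u j) ^ 2 ≤ d * t ^ 2 / (4 * ((2 : ℝ) ^ (b - 1) - 1) ^ 2) := by
  have hN : (1 : ℝ) ≤ (2 : ℝ) ^ (b - 1) - 1 := by
    have : (2 : ℝ) ^ 1 ≤ 2 ^ (b - 1) := pow_le_pow_right₀ (by norm_num) (by omega)
    linarith
  have : Nonempty (Fin d) := ⟨⟨0, hd⟩⟩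
  have hM : ⨆ i, |u i| ≤ t := ciSup_le ht
  have hs : qScale b d u ≤ t / ((2 : ℝ) ^ (b - 1) - 1) := by
    unfold qScale
    gcongr
  calc ∑ j, (symQuant b d u j - u j) ^ 2
      ≤ ∑ _j : Fin d, (t / ((2 : ℝ) ^ (b - 1) - 1) / 2) ^ 2 := by
        refine Finset.sum_le_sum fun j _ => ?_
        rw [← sq_abs]
        have := abs_symQuant_sub_le b d hb u j
        gcongr
        linarith
    _ = d * t ^ 2 / (4 * ((2 : ℝ) ^ (b - 1) - 1) ^ 2) := by
        simp only [Finset.sum_const, Finset.card_univ, Fintype.card_fin, nsmul_eq_mul]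
        field_simp
        norm_num

/-- Proposition 1, part 2: quantization error of the symmetric uniform quantizer after
random Walsh–Hadamard rotation. With probability at least `1 − δ` over the random signs
`r`, the quantization error of `v_r = H · Diag(σ(r)) · w` satisfies
`‖Q_b(v_r) − v_r‖² ≤ log(4d/δ) ‖w‖² / (2 (2^(b−1) − 1)²)`. -/
theorem sym_quant_error_random_hadamard (d b : ℕ) (hd : 1 ≤ d) (hb : 2 ≤ b)
    (H : Matrix (Fin d) (Fin d) ℝ) (hH1 : H * Hᵀ = 1) (hH2 : Hᵀ * H = 1)
    (hH : ∀ i j, |H i j| = 1 / Real.sqrt d)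
    (w : Fin d → ℝ) (hw : w ≠ 0) (δ : ℝ) (hδ0 : 0 < δ) (hδ1 : δ ≤ 1) :
    (1 - δ) * 2 ^ d
      ≤ ((Finset.univ.filter fun r : Fin d → Bool =>
            ∑ j, (symQuant b d (H.mulVec fun i => signVec r i * w i) j
                    - H.mulVec (fun i => signVec r i * w i) j) ^ 2
              ≤ Real.log (4 * d / δ) * (∑ i, (w i) ^ 2) /
                  (2 * ((2 : ℝ) ^ (b - 1) - 1) ^ 2)).card : ℝ) := by
  have hd0 : (0 : ℝ) < d := by exact_mod_cast hd
  set L := Real.log (4 * d / δ) with hLdef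
  set W := ∑ i, (w i) ^ 2 with hWdef
  have hW : 0 < W := by
    obtain ⟨i, hi⟩ := Function.ne_iff.mp hw
    exact Finset.sum_pos' (fun _ _ => sq_nonneg _) ⟨i, Finset.mem_univ _, sq_pos_iff.mpr hi⟩
  have hA : 0 < W / d := by positivity
  have hL : 0 ≤ L := by
    apply Real.log_nonneg
    rw [le_div_iff₀ hδ0]
    have : (1 : ℝ) ≤ d := by exact_mod_cast hd
    linarith
  have hexp : Real.exp (-L) = δ / (4 * d) := by
    rw [Real.exp_neg, hLdef, Real.exp_log (by positivity), inv_div]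
  set t := Real.sqrt (2 * L * (W / d)) with ht
  have ht2 : t ^ 2 = 2 * L * (W / d) := Real.sq_sqrt (by positivity)
  have hsum : ∀ j, ∑ i, (H j i * w i) ^ 2 = W / d := fun j => by
    rw [hWdef, Finset.sum_div]
    refine Finset.sum_congr rfl fun i _ => ?_
    rw [mul_pow, ← sq_abs (H j i), hH, div_pow, Real.sq_sqrt hd0.le]
    ring
  let P : Fin d → Finset (Fin d → Bool) := fun j =>
    Finset.univ.filter fun r => t < ∑ i, signVec r i * (H j i * w i)
  let N : Fin d → Finset (Fin d → Bool) := fun j =>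
    Finset.univ.filter fun r => t < ∑ i, signVec r i * (-(H j i * w i))
  have hP : ∀ j, ((P j).card : ℝ) ≤ 2 ^ d * (δ / (4 * d)) := fun j =>
    hexp ▸ card_tail_le (fun i => H j i * w i) (W / d) L hA hL (hsum j)
  have hN : ∀ j, ((N j).card : ℝ) ≤ 2 ^ d * (δ / (4 * d)) := fun j =>
    hexp ▸ card_tail_le (fun i => -(H j i * w i)) (W / d) L hA hL (by simpa using hsum j)
  set G := Finset.univ.filter fun r : Fin d → Bool =>
    ∑ j, (symQuant b d (H.mulVec fun i => signVec r i * w i) j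
      - H.mulVec (fun i => signVec r i * w i) j) ^ 2
        ≤ L * W / (2 * ((2 : ℝ) ^ (b - 1) - 1) ^ 2) with hG
  let B : Finset (Fin d → Bool) := Finset.univ.biUnion fun j => P j ∪ N j
  have hcover : (Finset.univ : Finset (Fin d → Bool)) ⊆ G ∪ B := by
    intro r _
    by_cases hr : r ∈ B
    · exact Finset.mem_union_right _ hr
    refine Finset.mem_union_left _ (Finset.mem_filter.mpr ⟨Finset.mem_univ _, ?_⟩)
    have hbd : ∀ j, |H.mulVec (fun i => signVec r i * w i) j| ≤ t := by
      intro j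
      have e : H.mulVec (fun i => signVec r i * w i) j
          = ∑ i, signVec r i * (H j i * w i) := by
        simp only [Matrix.mulVec, dotProduct]
        exact Finset.sum_congr rfl fun i _ => by ring
      have hj : r ∉ P j ∪ N j := fun h =>
        hr (Finset.mem_biUnion.mpr ⟨j, Finset.mem_univ _, h⟩)
      simp only [P, N, Finset.mem_union, Finset.mem_filter, Finset.mem_univ, true_and,
        not_or, not_lt, mul_neg, Finset.sum_neg_distrib] at hj
      rw [e, abs_le]
      exact ⟨by linarith [hj.2], hj.1⟩
    refine (sum_symQuant_sub_sq_le b d hd hb _ t hbd).trans (le_of_eq ?_)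
    rw [ht2, show (d : ℝ) * (2 * L * (W / d)) = 2 * (L * W) by field_simp,
      show (4 : ℝ) * ((2 : ℝ) ^ (b - 1) - 1) ^ 2 = 2 * (2 * ((2 : ℝ) ^ (b - 1) - 1) ^ 2) by ring,
      mul_div_mul_left _ _ (two_ne_zero)]
  have hB : (B.card : ℝ) ≤ 2 ^ d * (δ / 2) := by
    have h1 : (B.card : ℝ) ≤ ∑ j, ((P j ∪ N j).card : ℝ) := by
      exact_mod_cast Finset.card_biUnion_le
    refine h1.trans ?_
    calc ∑ j, ((P j ∪ N j).card : ℝ) ≤ ∑ _j : Fin d, 2 * (2 ^ d * (δ / (4 * d))) := by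
          refine Finset.sum_le_sum fun j _ => ?_
          have : ((P j ∪ N j).card : ℝ) ≤ (P j).card + (N j).card := by
            exact_mod_cast Finset.card_union_le _ _
          linarith [hP j, hN j]
      _ = 2 ^ d * (δ / 2) := by
          simp only [Finset.sum_const, Finset.card_univ, Fintype.card_fin, nsmul_eq_mul]
          field_simp
          norm_num
  have hcard : (2 : ℝ) ^ d ≤ G.card + B.card := by
    have h := (Finset.card_le_card hcover).trans (Finset.card_union_le _ _)
    rw [Finset.card_univ, Fintype.card_fun, Fintype.card_bool, Fintype.card_fin] at h
    exact_mod_cast h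
  have : 0 < (2 : ℝ) ^ d * δ := by positivity
  linarith
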